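/- arXiv:2402.10199 — 2 statements merged into one kernel-verified Lean document; each statement's English description precedes it below -/
import Mathlib

section
/- Let (X, σ_X) be a one-sided subshift with the weak specification property and 𝓕 = {log f_n} an almost additive sequence of continuous functions on X. Suppose that for every x ∈ X the limit f̂(x) := lim_{n→∞} log(f_n(x)/f_{n-1}(σ_X x)) exists in ℝ. Then a measure μ ∈ M(X, σ_X) is a Gibbs measure for 𝓕 if and only if μ is a Gibbs measure for f̂. Consequently, if 𝓕 has a unique invariant Gibbs measure μ, then μ is the unique invariant Gibbs measure for f̂. -/
open MeasureTheory Filter Topology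

noncomputable section

/-- The one-sided shift map. -/
def shift {A : Type*} : (ℕ → A) → ℕ → A := fun x i => x (i + 1)

/-- A finite word appears in some point of `X`. -/
def AppearsIn {A : Type*} (X : Set (ℕ → A)) (w : List A) : Prop :=
  ∃ x ∈ X, ∃ m : ℕ, ∀ i : Fin w.length, x (m + i) = w.get i

/-- `X` is a (one-sided) subshift: a closed, shift-invariant set. -/
def IsSubshift {A : Type*} [TopologicalSpace A] (X : Set (ℕ → A)) : Prop :=
  IsClosed X ∧ shift '' X ⊆ X

/-- The weak specification property. -/
def WeakSpec {A : Type*} (X : Set (ℕ → A)) : Prop :=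
  ∃ p : ℕ, ∀ u v : List A, AppearsIn X u → AppearsIn X v →
    ∃ w : List A, w.length ≤ p ∧ AppearsIn X (u ++ w ++ v)

/-- The cylinder set `[x_1 … x_n]` inside `X`. -/
def cyl {A : Type*} (X : Set (ℕ → A)) (x : ℕ → A) (n : ℕ) : Set (ℕ → A) :=
  {z ∈ X | ∀ i < n, z i = x i}

/-- Birkhoff sum `(S_n g)(x)`. -/
def birk {A : Type*} (g : (ℕ → A) → ℝ) (n : ℕ) (x : ℕ → A) : ℝ :=
  ∑ i ∈ Finset.range n, g (shift^[i] x)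

/-- `μ` is a shift-invariant Borel probability measure concentrated on `X`,
i.e. an element of `M(X, σ_X)`. -/
def IsInvariantOn {A : Type*} [MeasurableSpace A] (μ : Measure (ℕ → A))
    (X : Set (ℕ → A)) : Prop :=
  IsProbabilityMeasure μ ∧ μ X = 1 ∧
    ∀ B : Set (ℕ → A), MeasurableSet B → μ (shift ⁻¹' B) = μ B

/-- `μ` is a Gibbs measure for the sequence `𝓕 = {log f_n}`. -/
def GibbsSeq {A : Type*} [MeasurableSpace A] (X : Set (ℕ → A))
    (f : ℕ → (ℕ → A) → ℝ) (μ : Measure (ℕ → A)) : Prop :=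
  ∃ P C : ℝ, 0 < C ∧ ∀ x ∈ X, ∀ n : ℕ, 1 ≤ n →
    C⁻¹ ≤ (μ (cyl X x n)).toReal / (Real.exp (-(n : ℝ) * P) * f n x) ∧
    (μ (cyl X x n)).toReal / (Real.exp (-(n : ℝ) * P) * f n x) ≤ C

/-- `μ` is a weak Gibbs measure for the sequence `𝓕 = {log f_n}`. -/
def WeakGibbsSeq {A : Type*} [MeasurableSpace A] (X : Set (ℕ → A))
    (f : ℕ → (ℕ → A) → ℝ) (μ : Measure (ℕ → A)) : Prop :=
  ∃ P : ℝ, ∃ C : ℕ → ℝ, (∀ n : ℕ, 1 ≤ n → 0 < C n) ∧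
    Tendsto (fun n : ℕ => Real.log (C n) / n) atTop (𝓝 0) ∧
    ∀ x ∈ X, ∀ n : ℕ, 1 ≤ n →
      (C n)⁻¹ ≤ (μ (cyl X x n)).toReal / (Real.exp (-(n : ℝ) * P) * f n x) ∧
      (μ (cyl X x n)).toReal / (Real.exp (-(n : ℝ) * P) * f n x) ≤ C n

/-- `μ` is a Gibbs measure for the (Borel measurable) function `g`. -/
def GibbsFun {A : Type*} [MeasurableSpace A] (X : Set (ℕ → A))
    (g : (ℕ → A) → ℝ) (μ : Measure (ℕ → A)) : Prop :=
  GibbsSeq X (fun n x => Real.exp (birk g n x)) μ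

/-- `μ` is a weak Gibbs measure for the (Borel measurable) function `g`. -/
def WeakGibbsFun {A : Type*} [MeasurableSpace A] (X : Set (ℕ → A))
    (g : (ℕ → A) → ℝ) (μ : Measure (ℕ → A)) : Prop :=
  WeakGibbsSeq X (fun n x => Real.exp (birk g n x)) μ

/-- The sequence `{log f_n}` is almost additive on `X` with constant `C`. -/
def AAOn {A : Type*} (X : Set (ℕ → A)) (f : ℕ → (ℕ → A) → ℝ) (C : ℝ) : Prop :=
  ∀ x ∈ X, ∀ n m : ℕ, 1 ≤ n → 1 ≤ m →
    Real.exp (-C) * (f n x * f m (shift^[n] x)) ≤ f (n + m) x ∧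
    f (n + m) x ≤ Real.exp C * (f n x * f m (shift^[n] x))

/-- The sequence `{log f_n}` is weakly almost additive on `X`. -/
def WeakAAOn {A : Type*} (X : Set (ℕ → A)) (f : ℕ → (ℕ → A) → ℝ) : Prop :=
  ∃ C : ℕ → ℝ, (∀ n : ℕ, 1 ≤ n → 0 < C n) ∧
    Tendsto (fun n : ℕ => C n / n) atTop (𝓝 0) ∧
    ∀ x ∈ X, ∀ n m : ℕ, 1 ≤ n → 1 ≤ m →
      Real.exp (-(C n)) * (f n x * f m (shift^[n] x)) ≤ f (n + m) x ∧
      f (n + m) x ≤ Real.exp (C n) * (f n x * f m (shift^[n] x))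

/-!
By telescoping, `birk fhat n x` is the limit as `m → ∞` of
`log f_{n+m}(x) - log f_m(σⁿ x)`. Almost additivity keeps every term of this sequence within `C` of
`log f_n(x)`, so `exp (birk fhat n x)` and `f_n(x)` differ by a factor at most `exp C`, uniformly
in `n` and `x`; such a factor is absorbed by the constant in the Gibbs inequality.
-/

section BirkhoffSum

variable {α G : Type*} {T : α → α} {s : Set α} {g : α → G} {a : ℕ → α → G} {x : α}

theorem tendsto_sub_iterate_birkhoffSum [AddCommGroup G] [TopologicalSpace G] [ContinuousAdd G]
    (hT : Set.MapsTo T s s)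
    (hlim : ∀ x ∈ s, Tendsto (fun m => a (m + 1) x - a m (T x)) atTop (𝓝 (g x)))
    (hx : x ∈ s) (n : ℕ) :
    Tendsto (fun m => a (n + m) x - a m (T^[n] x)) atTop (𝓝 (birkhoffSum T g n x)) := by
  induction n with
  | zero => simp [tendsto_const_nhds]
  | succ n ih =>
    have hsum := (ih.comp (tendsto_add_atTop_nat 1)).add (hlim _ (hT.iterate n hx))
    rw [birkhoffSum_succ]
    refine hsum.congr fun m => ?_
    rw [Function.comp_apply, sub_add_sub_cancel, Function.iterate_succ_apply', add_assoc n 1 m,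
      add_comm 1 m]

theorem norm_birkhoffSum_sub_le [SeminormedAddCommGroup G] {C : ℝ} {n : ℕ}
    (hT : Set.MapsTo T s s)
    (hlim : ∀ x ∈ s, Tendsto (fun m => a (m + 1) x - a m (T x)) atTop (𝓝 (g x)))
    (hx : x ∈ s) (hC : ∀ᶠ m in atTop, ‖a (n + m) x - (a n x + a m (T^[n] x))‖ ≤ C) :
    ‖birkhoffSum T g n x - a n x‖ ≤ C := by
  have hnorm := ((tendsto_sub_iterate_birkhoffSum hT hlim hx n).sub_const (a n x)).norm
  refine le_of_tendsto hnorm (hC.mono fun m hm => ?_)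
  rwa [sub_sub, add_comm (a m _)]

end BirkhoffSum

theorem abs_log_sub_log_le_iff {a b D : ℝ} (ha : 0 < a) (hb : 0 < b) :
    |Real.log a - Real.log b| ≤ D ↔ Real.exp (-D) ≤ a / b ∧ a / b ≤ Real.exp D := by
  have hab : 0 < a / b := div_pos ha hb
  rw [← Real.log_div ha.ne' hb.ne', abs_le, Real.le_log_iff_exp_le hab,
    Real.log_le_iff_le_exp hab]

section Gibbs

variable {A : Type*} {X : Set (ℕ → A)} {f g : ℕ → (ℕ → A) → ℝ} {C D : ℝ}

theorem AAOn.abs_log_sub_le (hf : AAOn X f C) (hX : Set.MapsTo shift X X)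
    (hfpos : ∀ n, 1 ≤ n → ∀ x ∈ X, 0 < f n x) {x : ℕ → A} (hx : x ∈ X) {n m : ℕ} (hn : 1 ≤ n)
    (hm : 1 ≤ m) :
    |Real.log (f (n + m) x) - (Real.log (f n x) + Real.log (f m (shift^[n] x)))| ≤ C := by
  have hn_pos := hfpos n hn x hx
  have hm_pos := hfpos m hm _ (hX.iterate n hx)
  have hprod_pos := mul_pos hn_pos hm_pos
  rw [← Real.log_mul hn_pos.ne' hm_pos.ne',
    abs_log_sub_log_le_iff (hfpos _ (Nat.le_add_right_of_le hn) x hx) hprod_pos,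
    le_div_iff₀ hprod_pos, div_le_iff₀ hprod_pos]
  exact hf x hx n m hn hm

theorem AAOn.abs_birk_sub_log_le (hf : AAOn X f C) (hX : Set.MapsTo shift X X)
    (hfpos : ∀ n, 1 ≤ n → ∀ x ∈ X, 0 < f n x) {fhat : (ℕ → A) → ℝ}
    (hlim : ∀ x ∈ X, Tendsto
      (fun n : ℕ => Real.log (f (n + 2) x / f (n + 1) (shift x))) atTop (𝓝 (fhat x)))
    {x : ℕ → A} (hx : x ∈ X) {n : ℕ} (hn : 1 ≤ n) :
    |birk fhat n x - Real.log (f n x)| ≤ C := by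
  have hlim_sub : ∀ y ∈ X, Tendsto
      (fun m => Real.log (f (m + 1) y) - Real.log (f m (shift y))) atTop (𝓝 (fhat y)) := by
    intro y hy
    refine (tendsto_add_atTop_iff_nat 1).1 ((hlim y hy).congr fun m => ?_)
    exact Real.log_div (hfpos _ (by lia) y hy).ne' (hfpos _ (by lia) _ (hX hy)).ne'
  exact norm_birkhoffSum_sub_le (a := fun n x => Real.log (f n x)) hX hlim_sub hx <|
    (eventually_ge_atTop 1).mono fun m hm => hf.abs_log_sub_le hX hfpos hx hn hm

variable [MeasurableSpace A] {μ : Measure (ℕ → A)}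

theorem GibbsSeq.of_abs_log_sub_le (h : GibbsSeq X f μ)
    (hf : ∀ n, 1 ≤ n → ∀ x ∈ X, 0 < f n x) (hg : ∀ n, 1 ≤ n → ∀ x ∈ X, 0 < g n x)
    (hfg : ∀ n, 1 ≤ n → ∀ x ∈ X, |Real.log (f n x) - Real.log (g n x)| ≤ D) :
    GibbsSeq X g μ := by
  obtain ⟨P, C, hC, hgibbs⟩ := h
  refine ⟨P, C * Real.exp D, by positivity, fun x hx n hn => ?_⟩
  have hf_pos := hf n hn x hx
  have hg_pos := hg n hn x hx
  obtain ⟨hlower, hupper⟩ := hgibbs x hx n hn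
  obtain ⟨hratio_lower, hratio_upper⟩ :=
    (abs_log_sub_log_le_iff hf_pos hg_pos).1 (hfg n hn x hx)
  have hsplit : (μ (cyl X x n)).toReal / (Real.exp (-(n : ℝ) * P) * g n x) =
      (μ (cyl X x n)).toReal / (Real.exp (-(n : ℝ) * P) * f n x) * (f n x / g n x) := by
    field_simp
  rw [hsplit, mul_inv, ← Real.exp_neg]
  constructor <;> gcongr

theorem gibbsSeq_congr_of_abs_log_sub_le
    (hf : ∀ n, 1 ≤ n → ∀ x ∈ X, 0 < f n x) (hg : ∀ n, 1 ≤ n → ∀ x ∈ X, 0 < g n x)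
    (hfg : ∀ n, 1 ≤ n → ∀ x ∈ X, |Real.log (f n x) - Real.log (g n x)| ≤ D) :
    GibbsSeq X f μ ↔ GibbsSeq X g μ :=
  ⟨fun h => h.of_abs_log_sub_le hf hg hfg, fun h => h.of_abs_log_sub_le hg hf fun n hn x hx =>
    (abs_sub_comm _ _).trans_le (hfg n hn x hx)⟩

end Gibbs

theorem stmt_5_general {A : Type*} [MeasurableSpace A] {X : Set (ℕ → A)}
    (hX : Set.MapsTo shift X X) {f : ℕ → (ℕ → A) → ℝ}
    (hfpos : ∀ n, 1 ≤ n → ∀ x ∈ X, 0 < f n x) (hAA : ∃ C, AAOn X f C) {fhat : (ℕ → A) → ℝ}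
    (hlim : ∀ x ∈ X, Tendsto
      (fun n : ℕ => Real.log (f (n + 2) x / f (n + 1) (shift x))) atTop (𝓝 (fhat x)))
    (μ : Measure (ℕ → A)) :
    GibbsSeq X f μ ↔ GibbsFun X fhat μ := by
  obtain ⟨C, hC⟩ := hAA
  refine gibbsSeq_congr_of_abs_log_sub_le (D := C) hfpos (fun _ _ _ _ => Real.exp_pos _)
    fun n hn x hx => ?_
  rw [Real.log_exp, abs_sub_comm]
  exact hC.abs_birk_sub_log_le hX hfpos hlim hx hn

/-- Theorem `go1` (i), second part: if `𝓕` is almost additive and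
`f̂(x) = lim log (f_n(x)/f_{n-1}(σ x))` exists everywhere, then an invariant measure is
Gibbs for `𝓕` iff it is Gibbs for `f̂`; and if `𝓕` has a unique invariant Gibbs measure
`μ`, then `μ` is the unique invariant Gibbs measure for `f̂`. -/
theorem stmt_5 {k : ℕ} (X : Set (ℕ → Fin k))
    (hX : IsSubshift X) (hspec : WeakSpec X)
    (f : ℕ → (ℕ → Fin k) → ℝ)
    (hfc : ∀ n : ℕ, 1 ≤ n → ContinuousOn (f n) X)
    (hfpos : ∀ n : ℕ, 1 ≤ n → ∀ x ∈ X, 0 < f n x)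
    (hAA : ∃ C : ℝ, 0 < C ∧ AAOn X f C)
    (fhat : (ℕ → Fin k) → ℝ)
    (hlim : ∀ x ∈ X, Tendsto
      (fun n : ℕ => Real.log (f (n + 2) x / f (n + 1) (shift x))) atTop (𝓝 (fhat x))) :
    (∀ μ : Measure (ℕ → Fin k), IsInvariantOn μ X →
      (GibbsSeq X f μ ↔ GibbsFun X fhat μ)) ∧
    (∀ μ : Measure (ℕ → Fin k), IsInvariantOn μ X → GibbsSeq X f μ →
      (∀ ν : Measure (ℕ → Fin k), IsInvariantOn ν X → GibbsSeq X f ν → ν = μ) →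
      (GibbsFun X fhat μ ∧
        ∀ ν : Measure (ℕ → Fin k), IsInvariantOn ν X → GibbsFun X fhat ν → ν = μ)) := by
  have hiff := stmt_5_general (Set.mapsTo_iff_image_subset.2 hX.2) hfpos
    (hAA.imp fun _ => And.right) hlim
  exact ⟨fun μ _ => hiff μ, fun μ _ hμ huniq =>
    ⟨(hiff μ).1 hμ, fun ν hν hνG => huniq ν hν ((hiff ν).2 hνG)⟩⟩
end
end

section
/- Let (X, σ_X) be a one-sided subshift with the weak specification property and 𝓕 = {log f_n} a weakly almost additive sequence of continuous functions on X. Suppose that for every x ∈ X the limit f̂(x) := lim_{n→∞} log(f_n(x)/f_{n-1}(σ_X x)) exists in ℝ. Then f̂ is a bounded Borel measurable function on X, lim_{n→∞} (1/n) sup_{x∈X} |log f_n(x) − (S_n f̂)(x)| = 0, lim_{n→∞} (1/n) ∫ log f_n dm = ∫ f̂ dm for every m ∈ M(X, σ_X), and every invariant Gibbs measure for 𝓕 is an invariant weak Gibbs measure for f̂. -/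
open MeasureTheory Filter Topology

noncomputable section

/-!
Write `φ_n = log f_n`. Telescoping along the orbit of `x`, the difference
`φ_{n+m}(x) - φ_m(σⁿ x)` is a sum of `n` increments `φ_{j+1}(y) - φ_j(σ y)`, so as `m → ∞` it tends
to `(S_n f̂)(x)`. Weak almost additivity keeps the same difference within `C_n` of `φ_n(x)`,
uniformly in `m`, hence `|φ_n - S_n f̂| ≤ C_n` on `X`. As `C_n = o(n)`, all the asymptotic claims
follow from this single bound.
-/

section Orbit

variable {α E : Type*} {T : α → α} {X : Set α} {φ : ℕ → α → E} {g : α → E} {C : ℕ → ℝ}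

/-- `g` is the pointwise limit on `X` of the increments `φ_{n+1} - φ_n ∘ T`; for `φ_n = log f_n` it
is the function `f̂`. The term `φ_0` is excluded, since sequences are indexed from `1`. -/
def IsLimitIncrementOn [TopologicalSpace E] [AddCommGroup E] (T : α → α) (X : Set α)
    (φ : ℕ → α → E) (g : α → E) : Prop :=
  ∀ x ∈ X, Tendsto (fun n => φ (n + 2) x - φ (n + 1) (T x)) atTop (𝓝 (g x))

/-- The sequence `φ` is additive along the orbits in `X`, up to an error `C n` depending only on the
length of the first block. Applied to `φ_n = log f_n`, this is weak almost additivity of `f`. -/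
def AlmostAdditiveOn [SeminormedAddCommGroup E] (T : α → α) (X : Set α) (φ : ℕ → α → E)
    (C : ℕ → ℝ) : Prop :=
  ∀ x ∈ X, ∀ n m : ℕ, 1 ≤ n → 1 ≤ m → ‖φ (n + m) x - φ n x - φ m (T^[n] x)‖ ≤ C n

/-- The Birkhoff sums of `g` approximate `φ` on `X` with error `C`. When `C n = o(n)` this says that
`φ` is asymptotically additive with potential `g`. -/
def BirkhoffApproxOn [SeminormedAddCommGroup E] (T : α → α) (X : Set α) (φ : ℕ → α → E)
    (g : α → E) (C : ℕ → ℝ) : Prop :=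
  ∀ x ∈ X, ∀ n : ℕ, 1 ≤ n → ‖φ n x - birkhoffSum T g n x‖ ≤ C n

theorem IsLimitIncrementOn.tendsto_sub_iterate [TopologicalSpace E] [AddCommGroup E]
    [IsTopologicalAddGroup E] (hg : IsLimitIncrementOn T X φ g) (hT : Set.MapsTo T X X)
    {x : α} (hx : x ∈ X) (n : ℕ) :
    Tendsto (fun m => φ (n + (m + 1)) x - φ (m + 1) (T^[n] x)) atTop
      (𝓝 (birkhoffSum T g n x)) := by
  induction n with
  | zero => simp [birkhoffSum_zero, tendsto_const_nhds]
  | succ n ih =>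
    have hlast := hg _ (hT.iterate n hx)
    rw [birkhoffSum_succ]
    refine ((ih.comp (tendsto_add_atTop_nat 1)).add hlast).congr fun m => ?_
    rw [Function.comp_apply, Function.iterate_succ_apply', sub_add_sub_cancel,
      show n + (m + 1 + 1) = n + 1 + (m + 1) by ring]

theorem IsLimitIncrementOn.measurable [MeasurableSpace α] [NormedAddCommGroup E]
    [SecondCountableTopology E] [MeasurableSpace E] [BorelSpace E]
    (hg : IsLimitIncrementOn T X φ g) (hT : Set.MapsTo T X X) (hTm : Measurable T)
    (hφ : ∀ n, 1 ≤ n → Measurable fun x : X => φ n x) : Measurable fun x : X => g x := by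
  have hTX : Measurable (hT.restrict T X X) := (hTm.comp measurable_subtype_coe).subtype_mk
  refine measurable_of_tendsto_metrizable
    (f := fun n (x : X) => φ (n + 2) x - φ (n + 1) (T x)) (fun n => ?_) ?_
  · exact (hφ _ (by lia)).sub ((hφ (n + 1) (by lia)).comp hTX)
  · exact tendsto_pi_nhds.2 fun x => hg x x.2

theorem AlmostAdditiveOn.birkhoffApproxOn [SeminormedAddCommGroup E]
    (hφ : AlmostAdditiveOn T X φ C) (hT : Set.MapsTo T X X) (hg : IsLimitIncrementOn T X φ g) :
    BirkhoffApproxOn T X φ g C := by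
  intro x hx n hn
  refine le_of_tendsto' ((hg.tendsto_sub_iterate hT hx n).const_sub (φ n x)).norm fun m => ?_
  rw [norm_sub_rev, sub_right_comm]
  exact hφ x hx n (m + 1) hn (by lia)

theorem BirkhoffApproxOn.exists_bound [SeminormedAddCommGroup E]
    (h : BirkhoffApproxOn T X φ g C) (hφ : ∃ B, ∀ x ∈ X, ‖φ 1 x‖ ≤ B) :
    ∃ B, ∀ x ∈ X, ‖g x‖ ≤ B := by
  obtain ⟨B, hB⟩ := hφ
  refine ⟨B + C 1, fun x hx => ?_⟩
  have hdiff := h x hx 1 le_rfl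
  rw [birkhoffSum_one] at hdiff
  calc ‖g x‖ ≤ ‖φ 1 x‖ + ‖φ 1 x - g x‖ := norm_le_norm_add_norm_sub _ _
    _ ≤ B + C 1 := add_le_add (hB x hx) hdiff

theorem BirkhoffApproxOn.tendsto_iSup_norm_sub [SeminormedAddCommGroup E]
    (h : BirkhoffApproxOn T X φ g C) (hC₀ : ∀ n, 1 ≤ n → 0 ≤ C n)
    (hC : Tendsto (fun n : ℕ => C n / n) atTop (𝓝 0)) :
    Tendsto (fun n : ℕ => (1 / (n : ℝ)) * ⨆ x : X, ‖φ n x - birkhoffSum T g n x‖) atTop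
      (𝓝 0) := by
  refine squeeze_zero' (.of_forall fun n => ?_) ?_ hC
  · exact mul_nonneg (by positivity) (Real.iSup_nonneg fun x => norm_nonneg _)
  · filter_upwards [eventually_ge_atTop 1] with n hn
    rw [one_div_mul_eq_div]
    gcongr
    exact Real.iSup_le (fun x => h x x.2 n hn) (hC₀ n hn)

end Orbit

section Integral

variable {α E : Type*} [MeasurableSpace α] [NormedAddCommGroup E] {T : α → α} {X : Set α}
  {φ : ℕ → α → E} {g : α → E} {C : ℕ → ℝ} {m : Measure α}

theorem integrable_birkhoffSum (hT : MeasurePreserving T m m) (hg : Integrable g m) (n : ℕ) :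
    Integrable (birkhoffSum T g n) m :=
  integrable_finsetSum _ fun i _ => (hT.iterate i).integrable_comp_of_integrable hg

theorem integral_birkhoffSum [NormedSpace ℝ E] (hT : MeasurePreserving T m m)
    (hg : Integrable g m) (n : ℕ) :
    ∫ x, birkhoffSum T g n x ∂m = (n : ℝ) • ∫ x, g x ∂m := by
  have hiter (i : ℕ) : ∫ x, g (T^[i] x) ∂m = ∫ x, g x ∂m := by
    have hTi := hT.iterate i
    rw [← integral_map hTi.aemeasurable (by rw [hTi.map_eq]; exact hg.aestronglyMeasurable),
      hTi.map_eq]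
  calc ∫ x, birkhoffSum T g n x ∂m = ∑ i ∈ Finset.range n, ∫ x, g (T^[i] x) ∂m :=
        integral_finsetSum _ fun i _ => (hT.iterate i).integrable_comp_of_integrable hg
    _ = (n : ℝ) • ∫ x, g x ∂m := by
        simp only [hiter, Finset.sum_const, Finset.card_range, Nat.cast_smul_eq_nsmul]

theorem BirkhoffApproxOn.integrable [IsFiniteMeasure m] (h : BirkhoffApproxOn T X φ g C)
    (hT : MeasurePreserving T m m) (hX : ∀ᵐ x ∂m, x ∈ X) (hg : Integrable g m) {n : ℕ}
    (hn : 1 ≤ n) (hφ : AEStronglyMeasurable (φ n) m) : Integrable (φ n) m := by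
  have hS := integrable_birkhoffSum hT hg n
  have hdiff : Integrable (φ n - birkhoffSum T g n) m :=
    .of_bound (hφ.sub hS.aestronglyMeasurable) (C n) (hX.mono fun x hx => h x hx n hn)
  simpa only [sub_add_cancel] using hdiff.add hS

theorem BirkhoffApproxOn.norm_integral_sub_le [NormedSpace ℝ E] [IsFiniteMeasure m]
    (h : BirkhoffApproxOn T X φ g C) (hT : MeasurePreserving T m m) (hX : ∀ᵐ x ∂m, x ∈ X)
    (hg : Integrable g m) {n : ℕ} (hn : 1 ≤ n) (hφ : AEStronglyMeasurable (φ n) m) :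
    ‖∫ x, φ n x ∂m - (n : ℝ) • ∫ x, g x ∂m‖ ≤ C n * m.real Set.univ := by
  rw [← integral_birkhoffSum hT hg,
    ← integral_sub (h.integrable hT hX hg hn hφ) (integrable_birkhoffSum hT hg n)]
  exact norm_integral_le_of_norm_le_const (hX.mono fun x hx => h x hx n hn)

theorem BirkhoffApproxOn.tendsto_integral [NormedSpace ℝ E] [IsFiniteMeasure m]
    (h : BirkhoffApproxOn T X φ g C) (hC : Tendsto (fun n : ℕ => C n / n) atTop (𝓝 0))
    (hT : MeasurePreserving T m m) (hX : ∀ᵐ x ∂m, x ∈ X) (hg : Integrable g m)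
    (hφ : ∀ n, 1 ≤ n → AEStronglyMeasurable (φ n) m) :
    Tendsto (fun n : ℕ => (1 / (n : ℝ)) • ∫ x, φ n x ∂m) atTop (𝓝 (∫ x, g x ∂m)) := by
  rw [tendsto_iff_norm_sub_tendsto_zero]
  have hbound : Tendsto (fun n : ℕ => C n / n * m.real Set.univ) atTop (𝓝 0) := by
    simpa only [zero_mul] using hC.mul_const (m.real Set.univ)
  refine squeeze_zero' (.of_forall fun n => norm_nonneg _) ?_ hbound
  filter_upwards [eventually_ge_atTop 1] with n hn
  have hn₀ : (n : ℝ) ≠ 0 := by positivity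
  calc ‖(1 / (n : ℝ)) • ∫ x, φ n x ∂m - ∫ x, g x ∂m‖
      = ‖(1 / (n : ℝ)) • (∫ x, φ n x ∂m - (n : ℝ) • ∫ x, g x ∂m)‖ := by
        rw [smul_sub, smul_smul, one_div_mul_cancel hn₀, one_smul]
    _ = ‖∫ x, φ n x ∂m - (n : ℝ) • ∫ x, g x ∂m‖ / n := by
        rw [norm_smul, norm_div, norm_one, RCLike.norm_natCast, one_div_mul_eq_div]
    _ ≤ C n * m.real Set.univ / n := by
        gcongr
        exact h.norm_integral_sub_le hT hX hg hn (hφ n hn)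
    _ = C n / n * m.real Set.univ := by ring

theorem aestronglyMeasurable_of_measurable_subtype [SecondCountableTopology E]
    [MeasurableSpace E] [BorelSpace E] (hXm : MeasurableSet X) (hX : ∀ᵐ x ∂m, x ∈ X)
    (hg : Measurable fun x : X => g x) : AEStronglyMeasurable g m := by
  rw [← Measure.restrict_eq_self_of_ae_mem hX]
  exact (aemeasurable_restrict_of_measurable_subtype hXm hg).aestronglyMeasurable

end Integral

section Logarithm

variable {α : Type*} {T : α → α} {X : Set α} {f : ℕ → α → ℝ} {g : α → ℝ}

theorem isLimitIncrementOn_log (hT : Set.MapsTo T X X)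
    (hf : ∀ n, 1 ≤ n → ∀ x ∈ X, f n x ≠ 0)
    (hlim : ∀ x ∈ X,
      Tendsto (fun n => Real.log (f (n + 2) x / f (n + 1) (T x))) atTop (𝓝 (g x))) :
    IsLimitIncrementOn T X (fun n x => Real.log (f n x)) g := fun x hx =>
  (hlim x hx).congr fun n =>
    Real.log_div (hf (n + 2) (by lia) x hx) (hf (n + 1) (by lia) (T x) (hT hx))

theorem abs_log_sub_log_sub_log_le {a b c C : ℝ} (ha : 0 < a) (hb : 0 < b) (hc : 0 < c)
    (hl : Real.exp (-C) * (a * b) ≤ c) (hu : c ≤ Real.exp C * (a * b)) :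
    |Real.log c - Real.log a - Real.log b| ≤ C := by
  have log_exp_mul (D : ℝ) :
      Real.log (Real.exp D * (a * b)) = D + (Real.log a + Real.log b) := by
    rw [Real.log_mul (Real.exp_pos D).ne' (by positivity), Real.log_exp,
      Real.log_mul ha.ne' hb.ne']
  have hl' := Real.log_le_log (by positivity) hl
  have hu' := Real.log_le_log hc hu
  rw [log_exp_mul] at hl' hu'
  rw [abs_le]
  constructor <;> linarith

end Logarithm

section Subshift

variable {A : Type*} {X : Set (ℕ → A)} {f : ℕ → (ℕ → A) → ℝ}

theorem IsSubshift.mapsTo_shift [TopologicalSpace A] (hX : IsSubshift X) :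
    Set.MapsTo shift X X :=
  Set.mapsTo_iff_image_subset.2 hX.2

theorem WeakAAOn.exists_almostAdditiveOn_log (hf : WeakAAOn X f) (hX : Set.MapsTo shift X X)
    (hfpos : ∀ n, 1 ≤ n → ∀ x ∈ X, 0 < f n x) :
    ∃ C : ℕ → ℝ, (∀ n, 1 ≤ n → 0 < C n) ∧ Tendsto (fun n : ℕ => C n / n) atTop (𝓝 0) ∧
      AlmostAdditiveOn shift X (fun n x => Real.log (f n x)) C := by
  obtain ⟨C, hC₀, hC, hfC⟩ := hf
  refine ⟨C, hC₀, hC, fun x hx n m hn hm => ?_⟩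
  exact abs_log_sub_log_sub_log_le (hfpos n hn x hx) (hfpos m hm _ (hX.iterate n hx))
    (hfpos (n + m) (by lia) x hx) (hfC x hx n m hn hm).1 (hfC x hx n m hn hm).2

theorem measurable_shift [MeasurableSpace A] : Measurable (shift : (ℕ → A) → ℕ → A) :=
  measurable_pi_lambda _ fun i => measurable_pi_apply (i + 1)

theorem IsInvariantOn.measurePreserving_shift [MeasurableSpace A] {μ : Measure (ℕ → A)}
    (hμ : IsInvariantOn μ X) : MeasurePreserving shift μ μ where
  measurable := measurable_shift
  map_eq := Measure.ext fun B hB => by rw [Measure.map_apply measurable_shift hB, hμ.2.2 B hB]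

theorem IsInvariantOn.ae_mem [MeasurableSpace A] {μ : Measure (ℕ → A)} (hμ : IsInvariantOn μ X)
    (hX : MeasurableSet X) : ∀ᵐ x ∂μ, x ∈ X :=
  have := hμ.1
  (mem_ae_iff_prob_eq_one hX).2 hμ.2.1

theorem GibbsSeq.weakGibbsSeq [MeasurableSpace A] {μ : Measure (ℕ → A)} (hμ : GibbsSeq X f μ) :
    WeakGibbsSeq X f μ := by
  obtain ⟨P, D, hD, hbound⟩ := hμ
  exact ⟨P, fun _ => D, fun _ _ => hD, tendsto_const_div_atTop_nhds_zero_nat _, hbound⟩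

theorem WeakGibbsSeq.exp_of_abs_log_sub_le [MeasurableSpace A] {μ : Measure (ℕ → A)}
    {φ : ℕ → (ℕ → A) → ℝ} {C : ℕ → ℝ} (hμ : WeakGibbsSeq X f μ)
    (hf : ∀ n, 1 ≤ n → ∀ x ∈ X, 0 < f n x)
    (hC : Tendsto (fun n : ℕ => C n / n) atTop (𝓝 0))
    (hφ : ∀ x ∈ X, ∀ n, 1 ≤ n → |Real.log (f n x) - φ n x| ≤ C n) :
    WeakGibbsSeq X (fun n x => Real.exp (φ n x)) μ := by
  obtain ⟨P, D, hD₀, hD, hbound⟩ := hμ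
  refine ⟨P, fun n => D n * Real.exp (C n), fun n hn => mul_pos (hD₀ n hn) (Real.exp_pos _), ?_,
    fun x hx n hn => ?_⟩
  · have hsum : Tendsto (fun n : ℕ => Real.log (D n) / n + C n / n) atTop (𝓝 0) := by
      simpa only [add_zero] using hD.add hC
    refine hsum.congr' ?_
    filter_upwards [eventually_ge_atTop 1] with n hn
    rw [Real.log_mul (hD₀ n hn).ne' (Real.exp_pos _).ne', Real.log_exp, add_div]
  · obtain ⟨hlower, hupper⟩ := hbound x hx n hn
    obtain ⟨hlogl, hlogu⟩ := abs_le.1 (hφ x hx n hn)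
    have hfx := hf n hn x hx
    have hratio : (μ (cyl X x n)).toReal / (Real.exp (-(n : ℝ) * P) * Real.exp (φ n x)) =
        (μ (cyl X x n)).toReal / (Real.exp (-(n : ℝ) * P) * f n x) *
          Real.exp (Real.log (f n x) - φ n x) := by
      rw [Real.exp_sub, Real.exp_log hfx]
      field_simp
    simp only [hratio, mul_inv, ← Real.exp_neg]
    constructor
    · exact mul_le_mul hlower (Real.exp_le_exp.2 hlogl) (Real.exp_pos _).le
        ((inv_pos.2 (hD₀ n hn)).le.trans hlower)
    · exact mul_le_mul hupper (Real.exp_le_exp.2 hlogu) (Real.exp_pos _).le (hD₀ n hn).le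

end Subshift

theorem stmt_6_general {A : Type*} [TopologicalSpace A] [CompactSpace A]
    [SecondCountableTopology A] [MeasurableSpace A] [BorelSpace A] (X : Set (ℕ → A))
    (hX : IsSubshift X) (f : ℕ → (ℕ → A) → ℝ)
    (hfc : ∀ n : ℕ, 1 ≤ n → ContinuousOn (f n) X)
    (hfpos : ∀ n : ℕ, 1 ≤ n → ∀ x ∈ X, 0 < f n x)
    (hWAA : WeakAAOn X f)
    (fhat : (ℕ → A) → ℝ)
    (hlim : ∀ x ∈ X, Tendsto
      (fun n : ℕ => Real.log (f (n + 2) x / f (n + 1) (shift x))) atTop (𝓝 (fhat x))) :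
    Measurable (fun x : X => fhat ↑x) ∧
    (∃ B : ℝ, ∀ x ∈ X, |fhat x| ≤ B) ∧
    Tendsto (fun n : ℕ =>
      (1 / (n : ℝ)) * ⨆ x : X, |Real.log (f n ↑x) - birk fhat n ↑x|) atTop (𝓝 0) ∧
    (∀ m : Measure (ℕ → A), IsInvariantOn m X →
      Tendsto (fun n : ℕ => (1 / (n : ℝ)) * ∫ x, Real.log (f n x) ∂m) atTop
        (𝓝 (∫ x, fhat x ∂m))) ∧
    (∀ μ : Measure (ℕ → A), IsInvariantOn μ X → GibbsSeq X f μ →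
      WeakGibbsFun X fhat μ) := by
  have hT : Set.MapsTo shift X X := hX.mapsTo_shift
  have hlogc (n : ℕ) (hn : 1 ≤ n) : ContinuousOn (fun x => Real.log (f n x)) X :=
    (hfc n hn).log fun x hx => (hfpos n hn x hx).ne'
  have hlogm (n : ℕ) (hn : 1 ≤ n) : Measurable fun x : X => Real.log (f n x) :=
    (hlogc n hn).domRestrict.measurable
  obtain ⟨C, hC₀, hC, hadd⟩ := hWAA.exists_almostAdditiveOn_log hT hfpos
  have hincr : IsLimitIncrementOn shift X (fun n x => Real.log (f n x)) fhat :=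
    isLimitIncrementOn_log hT (fun n hn x hx => (hfpos n hn x hx).ne') hlim
  have happrox := hadd.birkhoffApproxOn hT hincr
  have hmeas := hincr.measurable hT measurable_shift hlogm
  obtain ⟨B, hB⟩ := happrox.exists_bound
    (hX.1.isCompact.exists_bound_of_continuousOn (hlogc 1 le_rfl))
  refine ⟨hmeas, ⟨B, hB⟩, happrox.tendsto_iSup_norm_sub (fun n hn => (hC₀ n hn).le) hC,
    fun m hm => ?_, fun μ _ hμ => hμ.weakGibbsSeq.exp_of_abs_log_sub_le hfpos hC happrox⟩
  have := hm.1
  have hae := hm.ae_mem hX.1.measurableSet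
  have haesm {g : (ℕ → A) → ℝ} (hg : Measurable fun x : X => g x) : AEStronglyMeasurable g m :=
    aestronglyMeasurable_of_measurable_subtype hX.1.measurableSet hae hg
  exact happrox.tendsto_integral hC hm.measurePreserving_shift hae
    (.of_bound (haesm hmeas) B (hae.mono hB)) fun n hn => haesm (hlogm n hn)

/-- Theorem `go1` (ii): if `𝓕` is weakly almost additive and
`f̂(x) = lim log (f_n(x)/f_{n-1}(σ x))` exists everywhere, then `f̂` is bounded Borel
measurable, `(1/n)‖log f_n − S_n f̂‖_∞ → 0`, `(1/n)∫ log f_n dm → ∫ f̂ dm` for every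
invariant `m`, and every invariant Gibbs measure for `𝓕` is an invariant weak Gibbs
measure for `f̂`. -/
theorem stmt_6 {k : ℕ} (X : Set (ℕ → Fin k))
    (hX : IsSubshift X) (hspec : WeakSpec X)
    (f : ℕ → (ℕ → Fin k) → ℝ)
    (hfc : ∀ n : ℕ, 1 ≤ n → ContinuousOn (f n) X)
    (hfpos : ∀ n : ℕ, 1 ≤ n → ∀ x ∈ X, 0 < f n x)
    (hWAA : WeakAAOn X f)
    (fhat : (ℕ → Fin k) → ℝ)
    (hlim : ∀ x ∈ X, Tendsto
      (fun n : ℕ => Real.log (f (n + 2) x / f (n + 1) (shift x))) atTop (𝓝 (fhat x))) :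
    Measurable (fun x : X => fhat ↑x) ∧
    (∃ B : ℝ, ∀ x ∈ X, |fhat x| ≤ B) ∧
    Tendsto (fun n : ℕ =>
      (1 / (n : ℝ)) * ⨆ x : X, |Real.log (f n ↑x) - birk fhat n ↑x|) atTop (𝓝 0) ∧
    (∀ m : Measure (ℕ → Fin k), IsInvariantOn m X →
      Tendsto (fun n : ℕ => (1 / (n : ℝ)) * ∫ x, Real.log (f n x) ∂m) atTop
        (𝓝 (∫ x, fhat x ∂m))) ∧
    (∀ μ : Measure (ℕ → Fin k), IsInvariantOn μ X → GibbsSeq X f μ →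
      WeakGibbsFun X fhat μ) :=
  stmt_6_general X hX f hfc hfpos hWAA fhat hlim
end
end
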